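/- arXiv:1809.07699 — 2 statements merged into one kernel-verified Lean document; each statement's English description precedes it below -/
import Mathlib

section
/- Let p be a prime and let G be a finite p-group of maximal class with |G| ≥ p^3. Then p^2 ∈ cod(G). -/
open CategoryTheory

/-- The degree of a complex representation: the dimension of the underlying vector space. -/
noncomputable def repDegree {G : Type} [Group G] (V : FDRep ℂ G) : ℕ :=
  Module.finrank ℂ V

/-- The kernel of a representation of `G`, as a subgroup of `G`. -/
noncomputable def repKer {G : Type} [Group G] (V : FDRep ℂ G) : Subgroup G :=
  MonoidHom.ker (Representation.asGroupHom V.ρ)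

/-- The codegree of a character: `|G : ker χ| / χ(1)`. -/
noncomputable def codegree {G : Type} [Group G] (V : FDRep ℂ G) : ℕ :=
  (repKer V).index / repDegree V

/-- `cod(G)`: the set of codegrees of the irreducible complex characters of `G`. -/
def codSet (G : Type) [Group G] : Set ℕ :=
  {m | ∃ V : FDRep ℂ G, Simple V ∧ codegree V = m}

/-- `cd(G)`: the set of degrees of the irreducible complex characters of `G`. -/
def cdSet (G : Type) [Group G] : Set ℕ :=
  {m | ∃ V : FDRep ℂ G, Simple V ∧ repDegree V = m}

/-- The nilpotency class of `G`: the least `n` with `upperCentralSeries G n = ⊤`. -/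
noncomputable def nilClass (G : Type) [Group G] : ℕ :=
  sInf {n | upperCentralSeries G n = ⊤}

open scoped Classical in
/-- The character of `G` induced from the linear character `lam` of the subgroup `H`. -/
noncomputable def indLinearChar {G : Type} [Group G] [Fintype G] (H : Subgroup G)
    (lam : H →* ℂˣ) : G → ℂ :=
  fun g => (∑ x : G, if h : x * g * x⁻¹ ∈ H then ((lam ⟨x * g * x⁻¹, h⟩ : ℂˣ) : ℂ) else 0) /
    (Nat.card H : ℂ)

/-- A finite group is normally monomial if every irreducible complex character is induced
from a linear character of a normal subgroup. -/
def NormallyMonomial (G : Type) [Group G] [Fintype G] : Prop :=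
  ∀ V : FDRep ℂ G, Simple V → ∃ (H : Subgroup G) (lam : H →* ℂˣ),
    H.Normal ∧ FDRep.character V = indLinearChar H lam

/-! Codegrees survive inflation, so `cod(G/N) ⊆ cod(G)`. Dividing by the center lowers the class
by one and the order by at least a factor `p`, so repeated division reduces a group of maximal class
to a nonabelian group of order `p³`. There the center has order `p`, hence any irreducible
representation nontrivial on it is faithful, since a nontrivial normal subgroup of a nilpotent group
meets the center. As commutators are central, a faithful irreducible character vanishes off the
center, and its norm being one gives `χ(1)² = |G : Z(G)| = p²`, so its codegree is `p³ / p`. -/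

open scoped commutatorElement MonoidAlgebra

section Subrepresentation

variable {k G V : Type*} [Field k] [Monoid G] [AddCommGroup V] [Module k V]
  {ρ : Representation k G V}

lemma isIrreducible_toRepresentation_of_isAtom {σ : Subrepresentation ρ} (hσ : IsAtom σ) :
    σ.toRepresentation.IsIrreducible := by
  have map_le (τ : Subrepresentation σ.toRepresentation) :
      ∃ τ' ≤ σ, τ'.toSubmodule = τ.toSubmodule.map σ.toSubmodule.subtype := by
    refine ⟨⟨τ.toSubmodule.map σ.toSubmodule.subtype, ?_⟩, Submodule.map_subtype_le _ _, rfl⟩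
    rintro g _ ⟨v, hv, rfl⟩
    exact ⟨_, τ.apply_mem_toSubmodule g hv, rfl⟩
  have : Nontrivial (Subrepresentation σ.toRepresentation) := by
    refine ⟨⊥, ⊤, fun h ↦ hσ.1 (Subrepresentation.toSubmodule_injective ?_)⟩
    exact Submodule.subsingleton_iff_eq_bot.1 (Submodule.subsingleton_iff _ |>.1
      (subsingleton_iff_bot_eq_top.1 (congrArg Subrepresentation.toSubmodule h)))
  refine ⟨fun τ ↦ ?_⟩
  obtain ⟨τ', hle, hτ'⟩ := map_le τ
  refine (hσ.le_iff.1 hle).imp (fun h ↦ ?_) (fun h ↦ ?_) <;>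
    apply Subrepresentation.toSubmodule_injective
  · exact Submodule.map_injective_of_injective σ.toSubmodule.subtype_injective
      (by rw [← hτ', h]; exact (Submodule.map_bot _).symm)
  · exact Submodule.map_injective_of_injective σ.toSubmodule.subtype_injective
      (by rw [← hτ', h]; exact (Submodule.map_subtype_top _).symm)

lemma exists_isIrreducible_subrepresentation_apply_ne_one [ρ.IsSemisimpleRepresentation] {g : G}
    (hg : ρ g ≠ 1) :
    ∃ σ : Subrepresentation ρ, σ.toRepresentation.IsIrreducible ∧ σ.toRepresentation g ≠ 1 := by
  have := ρ.isSemisimpleRepresentation_iff_isSemisimpleModule_asModule.1 ‹_›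
  by_contra! hfix
  have fixes_simple (I : Submodule k[G] ρ.asModule) (hI : IsSimpleModule k[G] I) :
      ∀ x ∈ I, ρ g x = x := by
    intro x hx
    have irreducible := isIrreducible_toRepresentation_of_isAtom
      ((OrderIso.isAtom_iff Subrepresentation.subrepresentationSubmoduleOrderIso.symm I).2
        (isSimpleModule_iff_isAtom.1 hI))
    exact congrArg Subtype.val (LinearMap.congr_fun (hfix _ irreducible) ⟨x, hx⟩)
  suffices fixes_all : ∀ x : ρ.asModule, ρ g x = x from hg (LinearMap.ext fixes_all)
  intro x
  have hx : x ∈ sSup {I : Submodule k[G] ρ.asModule | IsSimpleModule k[G] I} := by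
    rw [IsSemisimpleModule.sSup_simples_eq_top]
    exact Submodule.mem_top
  rw [sSup_eq_iSup'] at hx
  exact Submodule.iSup_induction _ (motive := fun x : ρ.asModule ↦ ρ g x = x) hx
    (fun I ↦ fixes_simple I I.2) (map_zero _) fun x y hx hy ↦
      ((ρ g).map_add x y).trans (congrArg₂ _ hx hy)

end Subrepresentation

lemma leftRegular_injective {k G : Type*} [CommSemiring k] [Nontrivial k] [Monoid G] :
    Function.Injective (Representation.leftRegular k G) := by
  intro g h hgh
  have h := LinearMap.congr_fun hgh (MonoidAlgebra.single 1 1)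
  simp only [Representation.ofMulAction_single, smul_eq_mul, mul_one] at h
  exact MonoidAlgebra.of_injective h

section Character

variable {k G V : Type*} [Field k] [Group G] [AddCommGroup V] [Module k V]
  {ρ : Representation k G V}

lemma character_eq_zero_of_commutator_eq_smul_one {g y : G} {c : k} (hc : c ≠ 1)
    (hgy : ρ ⁅g, y⁆ = c • 1) : ρ.character g = 0 := by
  have character_eq_mul_self : ρ.character g = c * ρ.character g :=
    calc ρ.character g = LinearMap.trace k V (ρ (⁅g, y⁆ * (y * g * y⁻¹))) := by
          simp [Representation.character, commutatorElement_def, mul_assoc]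
      _ = c * ρ.character (y * g * y⁻¹) := by
          rw [map_mul, hgy, smul_mul_assoc, one_mul, map_smul, smul_eq_mul,
            Representation.character]
      _ = c * ρ.character g := by rw [ρ.char_conj]
  by_contra hχ
  exact hc ((mul_eq_right₀ hχ).1 character_eq_mul_self.symm)

variable [FiniteDimensional k V]

lemma character_mul_character_inv_of_eq_smul_one {g : G} {c : k} (hg : ρ g = c • 1) :
    ρ.character g * ρ.character g⁻¹ = (Module.finrank k V : k) ^ 2 := by
  calc ρ.character g * ρ.character g⁻¹
      = Module.finrank k V * LinearMap.trace k V (c • ρ g⁻¹) := by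
        simp only [Representation.character, hg, map_smul, LinearMap.trace_one, smul_eq_mul]
        ring
    _ = Module.finrank k V * LinearMap.trace k V (ρ g * ρ g⁻¹) := by
        rw [hg, smul_mul_assoc, one_mul]
    _ = (Module.finrank k V : k) ^ 2 := by
        rw [← map_mul, mul_inv_cancel, map_one, LinearMap.trace_one, sq]

variable [IsAlgClosed k] [ρ.IsIrreducible]

lemma exists_eq_smul_one_of_mem_center {z : G} (hz : z ∈ Subgroup.center G) :
    ∃ c : k, ρ z = c • 1 := by
  let f : ρ.IntertwiningMap ρ :=
    { toLinearMap := ρ z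
      isIntertwining' := fun g ↦ by
        change ρ z * ρ g = ρ g * ρ z
        rw [← map_mul, ← map_mul, Subgroup.mem_center_iff.1 hz g] }
  obtain ⟨c, hc⟩ :=
    (Representation.IsIrreducible.algebraMap_intertwiningMap_bijective_of_isAlgClosed (ρ := ρ)).2 f
  exact ⟨c, (congrArg Representation.IntertwiningMap.toLinearMap hc).symm⟩

lemma sum_character_mul_character_inv_eq_card [Fintype G] [NeZero (Nat.card G : k)] :
    ∑ g, ρ.character g * ρ.character g⁻¹ = Nat.card G := by
  have := invertibleOfNonzero (NeZero.ne (Nat.card G : k))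
  have h := ρ.char_orthonormal ρ
  rw [if_pos ⟨.refl ρ⟩, inv_mul_eq_one₀ (NeZero.ne _)] at h
  exact h.symm

lemma character_eq_zero_of_notMem_center (hG : commutator G ≤ Subgroup.center G)
    (hρ : Function.Injective ρ) {g : G} (hg : g ∉ Subgroup.center G) : ρ.character g = 0 := by
  obtain ⟨y, hy⟩ : ∃ y : G, ⁅g, y⁆ ≠ 1 := by
    by_contra! h
    exact hg (Subgroup.mem_center_iff.2 fun y ↦
      (commutatorElement_eq_one_iff_mul_comm.1 (h y)).symm)
  obtain ⟨c, hc⟩ := exists_eq_smul_one_of_mem_center (ρ := ρ)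
    (hG (Subgroup.commutator_mem_commutator (Subgroup.mem_top g) (Subgroup.mem_top y)))
  refine character_eq_zero_of_commutator_eq_smul_one (fun hc1 ↦ hy (hρ ?_)) hc
  rw [hc, hc1, one_smul, map_one]

theorem sq_finrank_eq_index_center [CharZero k] [Finite G]
    (hG : commutator G ≤ Subgroup.center G) (hρ : Function.Injective ρ) :
    Module.finrank k V ^ 2 = (Subgroup.center G).index := by
  classical
  have := Fintype.ofFinite G
  have term_eq (g : G) : ρ.character g * ρ.character g⁻¹ =
      if g ∈ Subgroup.center G then (Module.finrank k V : k) ^ 2 else 0 := by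
    split_ifs with hg
    · obtain ⟨c, hc⟩ := exists_eq_smul_one_of_mem_center (ρ := ρ) hg
      exact character_mul_character_inv_of_eq_smul_one hc
    · rw [character_eq_zero_of_notMem_center hG hρ hg, zero_mul]
  have card_center_mul : Nat.card (Subgroup.center G) * Module.finrank k V ^ 2 = Nat.card G := by
    have h := sum_character_mul_character_inv_eq_card (ρ := ρ)
    rw [Finset.sum_congr rfl fun g _ ↦ term_eq g, ← Finset.sum_filter, Finset.sum_const,
      nsmul_eq_mul, ← Fintype.card_subtype, ← Nat.card_eq_fintype_card] at h
    exact_mod_cast h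
  rw [← (Subgroup.center G).card_mul_index] at card_center_mul
  exact Nat.eq_of_mul_eq_mul_left Nat.card_pos card_center_mul

end Character

lemma normal_eq_bot_of_disjoint_center {G : Type*} [Group G] [Group.IsNilpotent G]
    {N : Subgroup G} [N.Normal] (hN : Disjoint N (Subgroup.center G)) : N = ⊥ := by
  have disjoint_upperCentralSeries (i : ℕ) : Disjoint N (Subgroup.upperCentralSeries G i) := by
    induction i with
    | zero => exact disjoint_bot_right
    | succ i ih =>
      rw [Subgroup.disjoint_def]
      intro x hxN hx
      have commutator_eq_one (y : G) : ⁅x, y⁆ = 1 :=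
        Subgroup.disjoint_def.1 ih
          (Subgroup.commutator_le_left N ⊤
            (Subgroup.commutator_mem_commutator hxN (Subgroup.mem_top y)))
          (Subgroup.mem_upperCentralSeries_succ_iff.1 hx y)
      exact Subgroup.disjoint_def.1 hN hxN (Subgroup.mem_center_iff.2 fun y ↦
        (commutatorElement_eq_one_iff_mul_comm.1 (commutator_eq_one y)).symm)
  have h := disjoint_upperCentralSeries (Group.nilpotencyClass G)
  rwa [Subgroup.upperCentralSeries_nilpotencyClass, disjoint_top] at h

lemma injective_of_apply_ne_one_of_card_center_prime {G M : Type*} [Group G]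
    [Group.IsNilpotent G] [MulOneClass M] (hcard : (Nat.card (Subgroup.center G)).Prime)
    {f : G →* M} {z : G} (hz : z ∈ Subgroup.center G) (hfz : f z ≠ 1) :
    Function.Injective f := by
  have := Fact.mk hcard
  have disjoint_center : Disjoint f.ker (Subgroup.center G) := by
    rw [← Subgroup.subgroupOf_eq_bot]
    exact (Subgroup.eq_bot_or_eq_top_of_prime_card _).resolve_right fun h ↦
      hfz (Subgroup.subgroupOf_eq_top.1 h hz)
  exact (MonoidHom.ker_eq_bot_iff f).1 (normal_eq_bot_of_disjoint_center disjoint_center)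

theorem exists_isIrreducible_subrepresentation_injective {k G V : Type*} [Field k] [Group G]
    [Group.IsNilpotent G] [AddCommGroup V] [Module k V] {ρ : Representation k G V}
    [ρ.IsSemisimpleRepresentation] (hcard : (Nat.card (Subgroup.center G)).Prime)
    (hρ : Function.Injective ρ) :
    ∃ σ : Subrepresentation ρ,
      σ.toRepresentation.IsIrreducible ∧ Function.Injective σ.toRepresentation := by
  have := Nat.finite_of_card_ne_zero hcard.ne_zero
  have := Finite.one_lt_card_iff_nontrivial.1 hcard.one_lt
  obtain ⟨⟨z, hz⟩, hz1⟩ := exists_ne (1 : Subgroup.center G)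
  have apply_ne_one : ρ z ≠ 1 := fun h ↦ hz1 (Subtype.ext (hρ (h.trans (map_one ρ).symm)))
  obtain ⟨σ, hσ, hσz⟩ := exists_isIrreducible_subrepresentation_apply_ne_one apply_ne_one
  exact ⟨σ, hσ, injective_of_apply_ne_one_of_card_center_prime hcard hz hσz⟩

section Codegree

variable {G : Type} [Group G]

lemma codegree_of_injective {V : Type} [AddCommGroup V] [Module ℂ V] [FiniteDimensional ℂ V]
    {ρ : Representation ℂ G V} (hρ : Function.Injective ρ) :
    codegree (FDRep.of ρ) = Nat.card G / Module.finrank ℂ V := by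
  have ker_eq_bot : repKer (FDRep.of ρ) = ⊥ :=
    (MonoidHom.ker_eq_bot_iff _).2 fun g h hgh ↦ hρ (congrArg Units.val hgh)
  rw [codegree, ker_eq_bot, Subgroup.index_bot]
  rfl

lemma simple_of_isIrreducible [Finite G] {V : Type} [AddCommGroup V] [Module ℂ V]
    [FiniteDimensional ℂ V] {ρ : Representation ℂ G V} [ρ.IsIrreducible] : Simple (FDRep.of ρ) := by
  have := Fintype.ofFinite G
  rw [FDRep.simple_iff_char_is_norm_one]
  exact sum_character_mul_character_inv_eq_card (ρ := ρ)

lemma codSet_subset_of_surjective [Finite G] {H : Type} [Group H] {f : G →* H}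
    (hf : Function.Surjective f) : codSet H ⊆ codSet G := by
  rintro _ ⟨V, hV, rfl⟩
  have := Finite.of_surjective f hf
  have := Action.full_res (V := FGModuleCat ℂ) f hf
  let W : FDRep ℂ G := (Action.res (FGModuleCat ℂ) f).obj V
  have simple_W : Simple W := by
    let e : (V ⟶ V) ≃ₗ[ℂ] (W ⟶ W) :=
      .ofBijective ((Action.res (FGModuleCat ℂ) f).mapLinearMap ℂ)
        ⟨(Action.res (FGModuleCat ℂ) f).map_injective,
          (Action.res (FGModuleCat ℂ) f).map_surjective⟩
    rw [FDRep.simple_iff_end_is_rank_one] at hV ⊢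
    rw [← e.finrank_eq, hV]
  have ker_W : repKer W = (repKer V).comap f := by
    ext g
    simp only [repKer, MonoidHom.mem_ker, Subgroup.mem_comap, Units.ext_iff]
    rfl
  refine ⟨W, simple_W, ?_⟩
  rw [codegree, codegree, ker_W, Subgroup.index_comap_of_surjective _ hf]
  rfl

end Codegree

section PGroup

variable {p : ℕ} [Fact p.Prime]

lemma finite_of_card_dvd_prime_pow {α : Type*} {n : ℕ} (hα : Nat.card α ∣ p ^ n) : Finite α :=
  Nat.finite_of_card_ne_zero (ne_zero_of_dvd_ne_zero (pow_ne_zero n (NeZero.ne p)) hα)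

lemma card_quotient_center_dvd_prime_pow {G : Type*} [Group G] [Nontrivial G] {n : ℕ}
    (hG : Nat.card G ∣ p ^ (n + 1)) : Nat.card (G ⧸ Subgroup.center G) ∣ p ^ n := by
  have := finite_of_card_dvd_prime_pow hG
  have isPGroup := IsPGroup.of_card_dvd_pow hG
  have := isPGroup.center_nontrivial
  have prime_dvd_card_center : p ∣ Nat.card (Subgroup.center G) :=
    (isPGroup.to_subgroup _).card_eq_or_dvd.resolve_left Finite.one_lt_card.ne'
  refine Nat.dvd_of_mul_dvd_mul_right (NeZero.pos p) ?_
  calc Nat.card (G ⧸ Subgroup.center G) * p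
      ∣ Nat.card (G ⧸ Subgroup.center G) * Nat.card (Subgroup.center G) :=
        mul_dvd_mul_left _ prime_dvd_card_center
    _ = Nat.card G := (Subgroup.card_eq_card_quotient_mul_card_subgroup _).symm
    _ ∣ p ^ n * p := pow_succ p n ▸ hG

theorem index_center_of_card_eq_prime_cube {G : Type*} [Group G] (hG : Nat.card G = p ^ 3)
    (hcomm : ¬ IsMulCommutative G) : (Subgroup.center G).index = p ^ 2 := by
  apply Nat.eq_prime_pow_of_dvd_least_prime_pow Fact.out
  · rw [pow_one]
    intro hdvd
    have := isCyclic_of_card_dvd_prime (α := G ⧸ Subgroup.center G) hdvd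
    exact hcomm (isMulCommutative_of_isCyclic_quotient_center_self G)
  · have : Nontrivial G := not_subsingleton_iff_nontrivial.1 fun _ ↦ hcomm inferInstance
    exact card_quotient_center_dvd_prime_pow hG.dvd

theorem card_center_of_card_eq_prime_cube {G : Type*} [Group G] (hG : Nat.card G = p ^ 3)
    (hcomm : ¬ IsMulCommutative G) : Nat.card (Subgroup.center G) = p := by
  have h := (Subgroup.center G).card_mul_index
  rw [index_center_of_card_eq_prime_cube hG hcomm, hG, pow_succ' p 2] at h
  exact Nat.eq_of_mul_eq_mul_right (pow_pos (NeZero.pos p) 2) h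

theorem commutator_le_center_of_card_eq_prime_cube {G : Type*} [Group G] (hG : Nat.card G = p ^ 3)
    (hcomm : ¬ IsMulCommutative G) : commutator G ≤ Subgroup.center G :=
  Subgroup.Normal.quotient_commutative_iff_commutator_le.1
    (IsPGroup.isMulCommutative_of_card_eq_prime_sq (index_center_of_card_eq_prime_cube hG hcomm))

theorem sq_mem_codSet_of_card_eq_prime_cube {G : Type} [Group G] (hG : Nat.card G = p ^ 3)
    (hcomm : ¬ IsMulCommutative G) : p ^ 2 ∈ codSet G := by
  have := finite_of_card_dvd_prime_pow hG.dvd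
  have := (IsPGroup.of_card hG).isNilpotent
  have center_prime : (Nat.card (Subgroup.center G)).Prime := by
    rw [card_center_of_card_eq_prime_cube hG hcomm]
    exact Fact.out
  obtain ⟨σ, hσ, hinj⟩ := exists_isIrreducible_subrepresentation_injective center_prime
    (leftRegular_injective (k := ℂ))
  have finrank_eq : Module.finrank ℂ σ.toSubmodule = p := by
    have h := sq_finrank_eq_index_center (commutator_le_center_of_card_eq_prime_cube hG hcomm) hinj
    rw [index_center_of_card_eq_prime_cube hG hcomm] at h
    exact Nat.pow_left_injective two_ne_zero h
  refine ⟨FDRep.of σ.toRepresentation, simple_of_isIrreducible, ?_⟩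
  rw [codegree_of_injective hinj, finrank_eq, hG]
  exact Nat.div_eq_of_eq_mul_left (NeZero.pos p) (pow_succ p 2)

theorem isMulCommutative_of_card_dvd_prime_sq {G : Type*} [Group G] (hG : Nat.card G ∣ p ^ 2) :
    IsMulCommutative G := by
  by_cases h : Nat.card G ∣ p
  · have := isCyclic_of_card_dvd_prime h
    infer_instance
  · exact IsPGroup.isMulCommutative_of_card_eq_prime_sq
      (Nat.eq_prime_pow_of_dvd_least_prime_pow Fact.out (by rwa [pow_one]) hG)

theorem sq_mem_codSet_of_card_dvd_prime_cube {G : Type} [Group G] (hG : Nat.card G ∣ p ^ 3)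
    (hcomm : ¬ IsMulCommutative G) : p ^ 2 ∈ codSet G := by
  refine sq_mem_codSet_of_card_eq_prime_cube
    (Nat.eq_prime_pow_of_dvd_least_prime_pow Fact.out (fun h ↦ hcomm ?_) hG) hcomm
  exact isMulCommutative_of_card_dvd_prime_sq h

theorem sq_mem_codSet_of_card_dvd_prime_pow_nilpotencyClass_succ {G : Type} [Group G]
    (hclass : 2 ≤ Group.nilpotencyClass G)
    (hcard : Nat.card G ∣ p ^ (Group.nilpotencyClass G + 1)) : p ^ 2 ∈ codSet G := by
  have := finite_of_card_dvd_prime_pow hcard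
  have := (IsPGroup.of_card_dvd_pow hcard).isNilpotent
  generalize hc : Group.nilpotencyClass G = c at hclass hcard
  induction c, hclass using Nat.le_induction generalizing G with
  | base =>
    apply sq_mem_codSet_of_card_dvd_prime_cube hcard
    rw [← Group.IsNilpotent.nilpotencyClass_le_one_iff, hc]
    norm_num
  | succ c _ ih =>
    have : Nontrivial G := by
      rw [← not_subsingleton_iff_nontrivial, ← Group.nilpotencyClass_zero_iff_subsingleton, hc]
      exact c.succ_ne_zero
    have class_quotient : Group.nilpotencyClass (G ⧸ Subgroup.center G) = c := by
      rw [Group.nilpotencyClass_quotient_center, hc, Nat.add_sub_cancel]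
    exact codSet_subset_of_surjective (QuotientGroup.mk'_surjective (Subgroup.center G))
      (ih inferInstance inferInstance class_quotient (card_quotient_center_dvd_prime_pow hcard))

end PGroup

lemma nilClass_eq_nilpotencyClass (G : Type) [Group G] [Group.IsNilpotent G] :
    nilClass G = Group.nilpotencyClass G := by
  have upperCentralSeries_nilClass : Subgroup.upperCentralSeries G (nilClass G) = ⊤ :=
    Nat.sInf_mem (s := {n | Subgroup.upperCentralSeries G n = ⊤})
      ⟨_, Subgroup.upperCentralSeries_nilpotencyClass⟩
  exact le_antisymm (Nat.sInf_le Subgroup.upperCentralSeries_nilpotencyClass)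
    (Subgroup.upperCentralSeries_eq_top_iff_nilpotencyClass_le.1 upperCentralSeries_nilClass)

/-- A maximal class `p`-group of order at least `p^3` has `p^2` as a codegree. -/
theorem maximal_class_p_sq_codegree (p n : ℕ) (hp : p.Prime) (G : Type) [Group G] [Fintype G]
    (hcard : Fintype.card G = p ^ n) (hn : 3 ≤ n) (hmax : nilClass G = n - 1) :
    p ^ 2 ∈ codSet G := by
  have := Fact.mk hp
  rw [← Nat.card_eq_fintype_card] at hcard
  have := (IsPGroup.of_card hcard).isNilpotent
  rw [nilClass_eq_nilpotencyClass] at hmax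
  apply sq_mem_codSet_of_card_dvd_prime_pow_nilpotencyClass_succ <;> rw [hmax]
  · exact Nat.le_sub_one_of_lt hn
  · rw [hcard, Nat.sub_add_cancel (by omega)]
end

section
/- Let p be a prime and let G be a finite p-group with |G| = p^n. If cod(G) = {p^i | 0 ≤ i ≤ n-1}, then G has nilpotence class at most 2 or G has maximal class (nilpotence class n-1). -/
open CategoryTheory

/-!
Let `|G| = p ^ n` and suppose that `Z₂(G) ≠ G`. A linear character whose kernel has order dividing
`p ^ 2` would have its kernel inside `Z₂(G)` and a cyclic quotient, which would force `Z₂(G) = G`.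
Comparing sizes, a character of codegree `p ^ (n - 1)` is therefore faithful of degree `p`.

Let `ρ` afford such a character. Then `Z(G)` is cyclic, and for `a ∈ Z₂(G)` not in `Z(G)` the
scalars `ρ ⁅a, g⁆` define a nontrivial linear character `χ` of `G` with `χ ^ p = 1`. The set of
eigenvalues of `ρ a` is stable under multiplication by the values of `χ`, so `ρ a` has `p` distinct
eigenvalues, everything commuting with it is diagonal in its eigenbasis, and `A = ker χ` is abelian
of index `p`. Hence all character degrees are at most `p`, and the kernel `K` of a character of
codegree `p ^ (n - 2)` has order `p`.

Now `Z(G)` and `Z(G/K)` are both cyclic. Choose `x ∉ A`, and `a ∈ A` in `Z₃(G)` but not in `Z₂(G)`;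
then `⁅a, x⁆` is central of order dividing `p` modulo `K`, but not central in `G`. If `K` were
smaller than `Z(G)`, all such elements of the cyclic group `Z(G/K)` would lie in `Z(G)/K`; so
`Z(G) = K` has order `p`. The kernel of the commutator map `⁅x, ·⁆` on `A` lies in `Z(G)`, so
`|A ∩ Zᵢ₊₁(G)| ≤ p |A ∩ Zᵢ(G)|`, and the upper central series has length at least `n - 1`.
-/

open scoped commutatorElement

section UpperCentralSeries

variable {G : Type*} [Group G]

theorem commutatorElement_mem_iff_commute_mk {N : Subgroup G} [N.Normal] {a b : G} :
    ⁅a, b⁆ ∈ N ↔ Commute (a : G ⧸ N) (b : G ⧸ N) := by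
  rw [← QuotientGroup.eq_one_iff]
  exact commutatorElement_eq_one_iff_commute (g₁ := (a : G ⧸ N)) (g₂ := b)

theorem mk_mem_center_quotient_iff {N : Subgroup G} [N.Normal] {a : G} :
    (a : G ⧸ N) ∈ Subgroup.center (G ⧸ N) ↔ ∀ g, ⁅a, g⁆ ∈ N := by
  simp only [commutatorElement_mem_iff_commute_mk, Subgroup.mem_center_iff]
  exact (QuotientGroup.forall_mk (C := fun b : G ⧸ N ↦ b * a = a * b)).trans
    (forall_congr' fun _ ↦ eq_comm)

theorem commutatorElement_mem_of_mem_left {N : Subgroup G} [hN : N.Normal] {a : G}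
    (ha : a ∈ N) (g : G) : ⁅a, g⁆ ∈ N := by
  rw [commutatorElement_mem_iff_commute_mk, (QuotientGroup.eq_one_iff a).2 ha]
  exact Commute.one_left _

theorem upperCentralSeries_succ_eq_top_of_isCyclic_quotient {N : Subgroup G} [N.Normal] {i : ℕ}
    (hN : N ≤ Subgroup.upperCentralSeries G (i + 1)) [IsCyclic (G ⧸ N)] :
    Subgroup.upperCentralSeries G (i + 1) = ⊤ := by
  have := isCyclic_of_surjective
    (QuotientGroup.map N (Subgroup.upperCentralSeries G (i + 1)) (MonoidHom.id G) hN)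
    (QuotientGroup.map_surjective_of_surjective _ _ _ (QuotientGroup.mk_surjective) _)
  let f := QuotientGroup.map (Subgroup.upperCentralSeries G i)
    (Subgroup.upperCentralSeries G (i + 1)) (MonoidHom.id G)
    (Subgroup.upperCentralSeries_mono G i.le_succ)
  have hf : f.ker ≤ Subgroup.center _ := by
    intro a' ha
    obtain ⟨a, rfl⟩ := QuotientGroup.mk_surjective a'
    exact mk_mem_center_quotient_iff.2
      (Subgroup.mem_upperCentralSeries_succ_iff.1 ((QuotientGroup.eq_one_iff a).1 ha))
  have hcomm := f.isMulCommutative_of_isCyclic_of_ker_le_center hf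
  refine (Subgroup.eq_top_iff' _).2 fun a ↦ Subgroup.mem_upperCentralSeries_succ_iff.2 fun b ↦ ?_
  exact commutatorElement_mem_iff_commute_mk.2 (hcomm.is_comm.comm _ _)

theorem inf_upperCentralSeries_add_le {N : Subgroup G} [N.Normal] {j : ℕ}
    (h : N ⊓ Subgroup.upperCentralSeries G (j + 1) ≤ Subgroup.upperCentralSeries G j) (k : ℕ) :
    N ⊓ Subgroup.upperCentralSeries G (j + k) ≤ Subgroup.upperCentralSeries G j := by
  induction k with
  | zero => exact inf_le_right
  | succ k ih =>
    rintro a ⟨haN, ha⟩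
    refine h ⟨haN, Subgroup.mem_upperCentralSeries_succ_iff.2 fun g ↦ ih ⟨?_, ?_⟩⟩
    · exact commutatorElement_mem_of_mem_left haN g
    · exact Subgroup.mem_upperCentralSeries_succ_iff.1 ha g

theorem le_upperCentralSeries_of_inf_succ_le [Group.IsNilpotent G] {N : Subgroup G} [N.Normal]
    {j : ℕ} (h : N ⊓ Subgroup.upperCentralSeries G (j + 1) ≤ Subgroup.upperCentralSeries G j) :
    N ≤ Subgroup.upperCentralSeries G j := by
  obtain ⟨c, hc⟩ := Group.IsNilpotent.nilpotent G
  have htop : Subgroup.upperCentralSeries G (j + c) = ⊤ :=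
    top_le_iff.1 (hc ▸ Subgroup.upperCentralSeries_mono G (Nat.le_add_left c j))
  simpa only [htop, inf_top_eq] using inf_upperCentralSeries_add_le h c

theorem exists_notMem_center_forall_commutatorElement_mem_center [Group.IsNilpotent G]
    (h : Subgroup.center G ≠ ⊤) :
    ∃ a ∉ Subgroup.center G, ∀ g, ⁅a, g⁆ ∈ Subgroup.center G := by
  by_contra! hcon
  refine h (top_le_iff.1 ?_)
  rw [← Subgroup.upperCentralSeries_one] at hcon ⊢
  refine le_upperCentralSeries_of_inf_succ_le fun a ha ↦ ?_
  by_contra haZ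
  obtain ⟨g, hg⟩ := hcon a haZ
  exact hg (Subgroup.mem_upperCentralSeries_succ_iff.1 ha.2 g)

end UpperCentralSeries

section PGroup

variable {G : Type*} [Group G] [Finite G] {p : ℕ} [hp : Fact p.Prime]

theorem prime_dvd_relIndex_of_lt (hG : IsPGroup p G) {H K : Subgroup G} (h : H < K) :
    p ∣ H.relIndex K := by
  obtain ⟨m, hm⟩ := (hG.to_subgroup K).index (H.subgroupOf K)
  have hm0 : m ≠ 0 := by
    rintro rfl
    exact h.not_ge (Subgroup.relIndex_eq_one.1 (hm.trans (pow_zero p)))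
  exact (dvd_pow_self p hm0).trans hm.symm.dvd

theorem pow_dvd_card_inf_upperCentralSeries (hG : IsPGroup p G) {N : Subgroup G} [N.Normal]
    {j : ℕ} (hN : ¬ N ≤ Subgroup.upperCentralSeries G j) :
    p ^ (j + 1) ∣ Nat.card (N ⊓ Subgroup.upperCentralSeries G (j + 1) : Subgroup G) := by
  have := hG.isNilpotent
  have hle : ∀ i, N ⊓ Subgroup.upperCentralSeries G i ≤ N ⊓ Subgroup.upperCentralSeries G (i + 1) :=
    fun i ↦ inf_le_inf_left N (Subgroup.upperCentralSeries_mono G i.le_succ)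
  have hlt : N ⊓ Subgroup.upperCentralSeries G j < N ⊓ Subgroup.upperCentralSeries G (j + 1) :=
    (hle j).lt_of_not_ge fun h ↦ hN (le_upperCentralSeries_of_inf_succ_le (h.trans inf_le_right))
  have hstep := prime_dvd_relIndex_of_lt hG hlt
  rw [← Subgroup.relIndex_bot_left, ← Subgroup.relIndex_mul_relIndex _ _ _ bot_le (hle j),
    Subgroup.relIndex_bot_left, pow_succ]
  refine mul_dvd_mul ?_ hstep
  cases j with
  | zero => simp
  | succ j =>
    exact pow_dvd_card_inf_upperCentralSeries hG
      fun h ↦ hN (h.trans (Subgroup.upperCentralSeries_mono G j.le_succ))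

theorem le_upperCentralSeries_of_card_dvd (hG : IsPGroup p G) {N : Subgroup G} [N.Normal] {j : ℕ}
    (hN : Nat.card N ∣ p ^ j) : N ≤ Subgroup.upperCentralSeries G j := by
  by_contra h
  have hdvd := ((pow_dvd_card_inf_upperCentralSeries hG h).trans
    (Subgroup.card_dvd_of_le inf_le_left)).trans hN
  exact absurd ((Nat.pow_dvd_pow_iff_le_right hp.out.one_lt).1 hdvd) (by omega)

theorem upperCentralSeries_eq_top_of_card (m : ℕ) (hG : Nat.card G = p ^ (m + 2)) :
    Subgroup.upperCentralSeries G (m + 1) = ⊤ := by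
  by_contra hne
  have hm : ¬ (⊤ : Subgroup G) ≤ Subgroup.upperCentralSeries G m := fun h ↦
    hne (top_le_iff.1 (h.trans (Subgroup.upperCentralSeries_mono G m.le_succ)))
  have hcard := pow_dvd_card_inf_upperCentralSeries (IsPGroup.of_card hG) hm
  rw [top_inf_eq] at hcard
  have hindex : (Subgroup.upperCentralSeries G (m + 1)).index ∣ p := by
    refine (Nat.mul_dvd_mul_iff_left (pow_pos hp.out.pos (m + 1))).1 ?_
    rw [← pow_succ, ← hG, ← Subgroup.card_mul_index (Subgroup.upperCentralSeries G (m + 1))]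
    exact mul_dvd_mul_right hcard _
  have : IsCyclic (G ⧸ Subgroup.upperCentralSeries G (m + 1)) :=
    isCyclic_of_card_dvd_prime (p := p) (by rwa [← Subgroup.index_eq_card])
  exact hne (upperCentralSeries_succ_eq_top_of_isCyclic_quotient le_rfl)

theorem exists_card_eq_pow_index_eq_pow {n : ℕ} (hG : Nat.card G = p ^ n) (H : Subgroup G) :
    ∃ i j, i + j = n ∧ Nat.card H = p ^ i ∧ H.index = p ^ j := by
  obtain ⟨i, hi⟩ := IsPGroup.iff_card.1 ((IsPGroup.of_card hG).to_subgroup H)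
  obtain ⟨j, hj⟩ := (IsPGroup.of_card hG).index H
  refine ⟨i, j, Nat.pow_right_injective hp.out.two_le ?_, hi, hj⟩
  change p ^ (i + j) = p ^ n
  rw [pow_add, ← hi, ← hj, Subgroup.card_mul_index, hG]

end PGroup

section Commutator

variable {G : Type*} [Group G]

/-- The commutator map `a ↦ ⁅x, f a⁆` along a homomorphism `f : H →* G`. It is multiplicative as
soon as its values commute with the image of `f`, because
`⁅x, a * b⁆ = ⁅x, a⁆ * a * ⁅x, b⁆ * a⁻¹`. -/
def commutatorHom {H : Type*} [Group H] (f : H →* G) (x : G)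
    (h : ∀ a b, Commute (f a) ⁅x, f b⁆) : H →* G :=
  MonoidHom.mk' (fun a ↦ ⁅x, f a⁆) fun a b ↦ by
    rw [map_mul, commutatorElement_mul_right_eq_mul_conj, mul_assoc, mul_assoc, ← mul_assoc (f a),
      (h a b).mul_inv_cancel]

theorem commutatorElement_pow_eq_one {a x : G} {n : ℕ} (h : Commute ⁅a, x⁆ x)
    (hx : Commute a (x ^ n)) : ⁅a, x⁆ ^ n = 1 := by
  have hconj : a * x * a⁻¹ = ⁅a, x⁆ * x := by rw [commutatorElement_def, inv_mul_cancel_right]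
  have hpow : ⁅a, x⁆ ^ n * x ^ n = x ^ n := by
    rw [← h.mul_pow, ← hconj, conj_pow, hx.mul_inv_cancel]
  exact mul_eq_right.1 hpow

theorem card_le_card_map_mul_card_ker {H : Type*} [Group H] [Finite H] (f : H →* G)
    (K : Subgroup H) : Nat.card K ≤ Nat.card (K.map f) * Nat.card f.ker := by
  rw [← Subgroup.relIndex_ker, ← Subgroup.card_mul_index (f.ker.subgroupOf K), mul_comm]
  refine Nat.mul_le_mul_left _ ?_
  exact Nat.card_le_card_of_injective (fun a ↦ (⟨a.1.1, a.2⟩ : f.ker))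
    fun a b hab ↦ Subtype.ext (Subtype.ext (Subtype.mk.inj hab))

end Commutator

section PrimeIndex

variable {G : Type*} [Group G] {A : Subgroup G}

theorem eq_top_of_lt_of_prime_index (hA : A.index.Prime) {S : Subgroup G} (h : A < S) : S = ⊤ := by
  rcases hA.eq_one_or_self_of_dvd _ (Subgroup.index_dvd_of_le h.le) with h1 | hp
  · exact Subgroup.index_eq_one.1 h1
  · have hmul := Subgroup.relIndex_mul_index h.le
    rw [hp] at hmul
    exact absurd (Subgroup.relIndex_eq_one.1 ((mul_eq_right₀ hA.ne_zero).1 hmul))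
      h.not_ge

theorem commutatorElement_mem_of_prime_index [IsMulCommutative A] (hA : A.index.Prime)
    {N : Subgroup G} [N.Normal] {a x : G} (ha : a ∈ A) (hx : x ∉ A) (h : ⁅a, x⁆ ∈ N) (g : G) :
    ⁅a, g⁆ ∈ N := by
  let S := (Subgroup.centralizer {(a : G ⧸ N)}).comap (QuotientGroup.mk' N)
  have hS : ∀ b, b ∈ S ↔ ⁅a, b⁆ ∈ N := fun b ↦ by
    rw [commutatorElement_mem_iff_commute_mk, Subgroup.mem_comap,
      Subgroup.mem_centralizer_singleton_iff]
    exact eq_comm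
  have hAS : A < S := SetLike.lt_iff_le_and_exists.2 ⟨fun b hb ↦ (hS b).2 ?_, x, (hS x).2 h, hx⟩
  · exact (hS g).1 (eq_top_of_lt_of_prime_index hA hAS ▸ Subgroup.mem_top g)
  · rw [commutatorElement_eq_one_iff_mul_comm.2 (setLike_mul_comm ha hb)]
    exact one_mem N

theorem mem_center_of_commute_of_prime_index [IsMulCommutative A] (hA : A.index.Prime)
    {a x : G} (ha : a ∈ A) (hx : x ∉ A) (h : Commute a x) : a ∈ Subgroup.center G := by
  refine Subgroup.mem_center_iff.2 fun g ↦ ?_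
  have hg : ⁅a, g⁆ ∈ (⊥ : Subgroup G) :=
    commutatorElement_mem_of_prime_index hA ha hx (Subgroup.mem_bot.2 h.commutator_eq) g
  exact (commutatorElement_eq_one_iff_mul_comm.1 (Subgroup.mem_bot.1 hg)).symm

theorem exists_notMem_of_prime_index (hA : A.index.Prime) : ∃ x, x ∉ A := by
  by_contra! h
  exact hA.ne_one (Subgroup.index_eq_one.2 ((Subgroup.eq_top_iff' A).2 h))

theorem card_inf_upperCentralSeries_le [Finite G] [A.Normal] [IsMulCommutative A]
    (hA : A.index.Prime) (i : ℕ) :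
    Nat.card (A ⊓ Subgroup.upperCentralSeries G i : Subgroup G) ≤
      Nat.card (Subgroup.center G) ^ i := by
  induction i with
  | zero => simp
  | succ i ih =>
    obtain ⟨x, hx⟩ := exists_notMem_of_prime_index hA
    have hxA : ∀ a ∈ A, ⁅x, a⁆ ∈ A := fun a ha ↦ by
      rw [← commutatorElement_inv]
      exact inv_mem (commutatorElement_mem_of_mem_left ha x)
    let f : A →* G := commutatorHom A.subtype x fun a b ↦
      setLike_mul_comm a.2 (hxA b b.2)
    let B := (A ⊓ Subgroup.upperCentralSeries G (i + 1)).subgroupOf A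
    have hker : Nat.card f.ker ≤ Nat.card (Subgroup.center G) := by
      refine Nat.card_le_card_of_injective (fun a ↦ ⟨a.1.1, ?_⟩)
        fun a b hab ↦ Subtype.ext (Subtype.ext (Subtype.mk.inj hab))
      exact mem_center_of_commute_of_prime_index hA a.1.2 hx
        (commutatorElement_eq_one_iff_commute.1 a.2).symm
    have hmap : B.map f ≤ A ⊓ Subgroup.upperCentralSeries G i := by
      rintro _ ⟨a, ha, rfl⟩
      refine ⟨hxA a a.2, ?_⟩
      change ⁅x, (a : G)⁆ ∈ Subgroup.upperCentralSeries G i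
      rw [← commutatorElement_inv]
      exact inv_mem (Subgroup.mem_upperCentralSeries_succ_iff.1 ha.2 x)
    calc Nat.card (A ⊓ Subgroup.upperCentralSeries G (i + 1) : Subgroup G)
        = Nat.card B := (Nat.card_congr (Subgroup.subgroupOfEquivOfLe inf_le_left).toEquiv).symm
      _ ≤ Nat.card (B.map f) * Nat.card f.ker := card_le_card_map_mul_card_ker f B
      _ ≤ Nat.card (Subgroup.center G) ^ i * Nat.card (Subgroup.center G) :=
        Nat.mul_le_mul ((Subgroup.card_le_of_le hmap).trans ih) hker
      _ = Nat.card (Subgroup.center G) ^ (i + 1) := (pow_succ _ _).symm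

theorem card_le_of_upperCentralSeries_eq_top [Finite G] [A.Normal] [IsMulCommutative A]
    (hA : A.index.Prime) {c : ℕ} (hc : Subgroup.upperCentralSeries G c = ⊤) :
    Nat.card G ≤ Nat.card (Subgroup.center G) ^ c * A.index := by
  have h := card_inf_upperCentralSeries_le hA c
  rw [hc, inf_top_eq] at h
  rw [← Subgroup.card_mul_index A]
  exact Nat.mul_le_mul_right _ h

theorem upperCentralSeries_eq_top_iff_of_card_center {p : ℕ} [hp : Fact p.Prime] {m : ℕ}
    (hG : Nat.card G = p ^ (m + 2)) [A.Normal] [IsMulCommutative A] (hA : A.index = p)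
    (hZ : Nat.card (Subgroup.center G) = p) {c : ℕ} :
    Subgroup.upperCentralSeries G c = ⊤ ↔ m + 1 ≤ c := by
  have : Finite G := Nat.finite_of_card_ne_zero (hG ▸ pow_ne_zero _ hp.out.ne_zero)
  constructor
  · intro hc
    have hle := card_le_of_upperCentralSeries_eq_top (A := A) (hA.symm ▸ hp.out) hc
    rw [hG, hZ, hA, ← pow_succ] at hle
    exact Nat.le_of_succ_le_succ ((Nat.pow_le_pow_iff_right hp.out.one_lt).1 hle)
  · intro hc
    exact top_le_iff.1 (upperCentralSeries_eq_top_of_card m hG ▸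
      Subgroup.upperCentralSeries_mono G hc)

end PrimeIndex

section CyclicCenter

theorem mem_zpowers_of_pow_orderOf_eq_one {C : Type*} [Group C] [Finite C] [IsCyclic C] {y w : C}
    (h : y ^ orderOf w = 1) : y ∈ Subgroup.zpowers w := by
  classical
  have := Fintype.ofFinite C
  let T : Finset C := {a | a ^ orderOf w = 1}
  have hsub : (Subgroup.zpowers w : Set C).toFinset ⊆ T := fun a ha ↦ by
    obtain ⟨m, rfl⟩ := Set.mem_toFinset.1 ha
    simp only [T, Finset.mem_filter_univ, ← zpow_natCast, zpow_comm w m]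
    rw [zpow_natCast, pow_orderOf_eq_one, one_zpow]
  have hcard : T.card ≤ (Subgroup.zpowers w : Set C).toFinset.card := by
    rw [Set.toFinset_card, ← Nat.card_eq_fintype_card]
    exact (IsCyclic.card_pow_eq_one_le (orderOf_pos w)).trans (Nat.card_zpowers w).ge
  have hy : y ∈ T := (Finset.mem_filter_univ y).2 h
  rwa [← Finset.eq_of_subset_of_card_le hsub hcard, Set.mem_toFinset] at hy

variable {G : Type*} [Group G] [Finite G] {p : ℕ} [hp : Fact p.Prime]

theorem mem_zpowers_of_mem_isCyclic (hG : IsPGroup p G) {C : Subgroup G} [IsCyclic C] {y z : G}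
    (hy : y ∈ C) (hz : z ∈ C) (hyp : y ^ p = 1) (hz1 : z ≠ 1) : y ∈ Subgroup.zpowers z := by
  have hyz : (⟨y, hy⟩ : C) ^ orderOf (⟨z, hz⟩ : C) = 1 := by
    rw [Subgroup.orderOf_mk, ← orderOf_dvd_iff_pow_eq_one, Subgroup.orderOf_mk]
    exact (orderOf_dvd_of_pow_eq_one hyp).trans (hG.dvd_orderOf hz1)
  obtain ⟨m, hm⟩ := mem_zpowers_of_pow_orderOf_eq_one hyz
  exact ⟨m, congrArg Subtype.val hm⟩

theorem mem_of_pow_prime_eq_one_of_isCyclic (hG : IsPGroup p G) {C K : Subgroup G} [IsCyclic C]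
    (hKC : K ≤ C) (hK : K ≠ ⊥) {y : G} (hy : y ∈ C) (hyp : y ^ p = 1) : y ∈ K := by
  obtain ⟨z, hzK, hz⟩ := K.bot_or_exists_ne_one.resolve_left hK
  exact Subgroup.zpowers_le.2 hzK (mem_zpowers_of_mem_isCyclic hG hy (hKC hzK) hyp hz)

theorem exists_mem_upperCentralSeries_diff (hG : IsPGroup p G) {A : Subgroup G} [A.Normal]
    (hA : A.index = p) {j : ℕ} (hj : Subgroup.upperCentralSeries G (j + 1) ≠ ⊤) :
    ∃ a ∈ A, a ∈ Subgroup.upperCentralSeries G (j + 2) ∧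
      a ∉ Subgroup.upperCentralSeries G (j + 1) := by
  have := hG.isNilpotent
  by_contra! h
  have hle : A ≤ Subgroup.upperCentralSeries G (j + 1) :=
    le_upperCentralSeries_of_inf_succ_le fun a ha ↦ h a ha.1 ha.2
  have : IsCyclic (G ⧸ A) :=
    isCyclic_of_prime_card (p := p) (by rw [← Subgroup.index_eq_card, hA])
  exact hj (upperCentralSeries_succ_eq_top_of_isCyclic_quotient hle)

theorem exists_mem_center_quotient_of_isCyclic_center (hG : IsPGroup p G)
    (h2 : Subgroup.upperCentralSeries G 2 ≠ ⊤) {A : Subgroup G} [A.Normal] [IsMulCommutative A]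
    (hA : A.index = p) {K : Subgroup G} [K.Normal] (hKZ : K ≤ Subgroup.center G) (hK : K ≠ ⊥)
    [IsCyclic (Subgroup.center G)] :
    ∃ y ∉ Subgroup.center G, (y : G ⧸ K) ∈ Subgroup.center (G ⧸ K) ∧ y ^ p ∈ K := by
  have hAp : A.index.Prime := hA ▸ hp.out
  obtain ⟨x, hx⟩ := exists_notMem_of_prime_index hAp
  have hxp : x ^ p ∈ A := hA ▸ A.pow_index_mem x
  obtain ⟨a, haA, ha3, ha2⟩ := exists_mem_upperCentralSeries_diff hG hA h2
  let y := ⁅a, x⁆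
  have hyA : y ∈ A := commutatorElement_mem_of_mem_left haA x
  have hyxZ : ⁅y, x⁆ ∈ Subgroup.center G := by
    rw [← Subgroup.upperCentralSeries_one]
    exact Subgroup.mem_upperCentralSeries_succ_iff.1
      (Subgroup.mem_upperCentralSeries_succ_iff.1 ha3 x) x
  have hyx : ⁅y, x⁆ ^ p = 1 :=
    commutatorElement_pow_eq_one (Subgroup.mem_center_iff.1 hyxZ x).symm
      (setLike_mul_comm hyA hxp)
  have hyxK : ⁅y, x⁆ ∈ K := mem_of_pow_prime_eq_one_of_isCyclic hG hKZ hK hyxZ hyx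
  refine ⟨y, fun hyZ ↦ ha2 ?_, ?_, ?_⟩
  · rw [Subgroup.mem_upperCentralSeries_succ_iff, Subgroup.upperCentralSeries_one]
    exact commutatorElement_mem_of_prime_index hAp haA hx hyZ
  · exact mk_mem_center_quotient_iff.2 (commutatorElement_mem_of_prime_index hAp hyA hx hyxK)
  · rw [← QuotientGroup.eq_one_iff]
    refine commutatorElement_pow_eq_one (a := (a : G ⧸ K)) (x := (x : G ⧸ K))
      (commutatorElement_mem_iff_commute_mk.1 hyxK) ?_
    exact (show Commute a (x ^ p) from setLike_mul_comm haA hxp).map (QuotientGroup.mk' K)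

theorem center_eq_of_isCyclic_center_quotient (hG : IsPGroup p G)
    (h2 : Subgroup.upperCentralSeries G 2 ≠ ⊤) {A : Subgroup G} [A.Normal] [IsMulCommutative A]
    (hA : A.index = p) {K : Subgroup G} [K.Normal] (hKZ : K ≤ Subgroup.center G) (hK : K ≠ ⊥)
    [IsCyclic (Subgroup.center G)] [IsCyclic (Subgroup.center (G ⧸ K))] :
    Subgroup.center G = K := by
  obtain ⟨y, hyZ, hy, hyp⟩ := exists_mem_center_quotient_of_isCyclic_center hG h2 hA hKZ hK
  refine le_antisymm (fun z hz ↦ ?_) hKZ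
  by_contra hzK
  have hz' : (z : G ⧸ K) ∈ Subgroup.center (G ⧸ K) :=
    mk_mem_center_quotient_iff.2 fun g ↦ by
      rw [Commute.commutator_eq (Subgroup.mem_center_iff.1 hz g).symm]
      exact one_mem K
  obtain ⟨m, hm⟩ := mem_zpowers_of_mem_isCyclic (hG.to_quotient K) hy hz'
    ((QuotientGroup.eq_one_iff _).2 hyp) (mt (QuotientGroup.eq_one_iff z).1 hzK)
  have hyz : (z ^ m)⁻¹ * y ∈ K := QuotientGroup.eq.1 hm
  exact hyZ ((Subgroup.mul_mem_cancel_left _ (inv_mem (zpow_mem hz m))).1 (hKZ hyz))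

end CyclicCenter

section Eigenbasis

variable {k V : Type*} [Field k] [AddCommGroup V] [Module k V]

theorem exists_smul_of_commute_of_injective_eigenvalues {ι : Type*} (b : Module.Basis ι k V)
    {μ : ι → k} (hμ : Function.Injective μ) {S T : Module.End k V}
    (hT : ∀ i, T (b i) = μ i • b i) (hST : Commute S T) (i : ι) : ∃ c : k, S (b i) = c • b i := by
  have hcoord : ∀ j, b.coord j ∘ₗ T = μ j • b.coord j := fun j ↦ b.ext fun l ↦ by
    rcases eq_or_ne l j with rfl | hl
    · simp [hT]
    · simp [hT, Finsupp.single_eq_of_ne' hl]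
  have hS : T (S (b i)) = μ i • S (b i) := by
    rw [← Module.End.mul_apply, ← hST.eq, Module.End.mul_apply, hT, map_smul]
  refine ⟨b.coord i (S (b i)), b.ext_elem fun j ↦ ?_⟩
  rcases eq_or_ne j i with rfl | hj
  · simp
  · have hμj : (μ j - μ i) * b.coord j (S (b i)) = 0 := by
      have h := LinearMap.congr_fun (hcoord j) (S (b i))
      rw [LinearMap.comp_apply, hS, map_smul, LinearMap.smul_apply, smul_eq_mul,
        smul_eq_mul] at h
      rw [sub_mul, h, sub_self]
    have hzero := (mul_eq_zero.1 hμj).resolve_left (sub_ne_zero.2 (hμ.ne hj))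
    simpa [Finsupp.single_eq_of_ne hj] using hzero

theorem commute_of_commute_of_injective_eigenvalues [FiniteDimensional k V] {ι : Type*} [Fintype ι]
    (hι : Fintype.card ι = Module.finrank k V) {μ : ι → k} (hμ : Function.Injective μ)
    {S₁ S₂ T : Module.End k V} (hT : ∀ i, T.HasEigenvalue (μ i))
    (h₁ : Commute S₁ T) (h₂ : Commute S₂ T) : Commute S₁ S₂ := by
  choose v hv using fun i ↦ (hT i).exists_hasEigenvector
  let b := basisOfLinearIndependentOfCardEqFinrank' v
    (Module.End.eigenvectors_linearIndependent' T μ hμ v hv) hι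
  have hb : ∀ i, T (b i) = μ i • b i := fun i ↦ by
    rw [coe_basisOfLinearIndependentOfCardEqFinrank', (hv i).apply_eq_smul]
  refine b.ext fun i ↦ ?_
  obtain ⟨c, hc⟩ := exists_smul_of_commute_of_injective_eigenvalues b hμ hb h₁ i
  obtain ⟨d, hd⟩ := exists_smul_of_commute_of_injective_eigenvalues b hμ hb h₂ i
  rw [Module.End.mul_apply, Module.End.mul_apply, hc, hd, map_smul, map_smul, hc, hd, smul_comm]

theorem pow_finrank_eq_one_of_mul_eq_smul_mul {S T : Module.End k V} (hS : IsUnit S)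
    (hT : IsUnit T) {c : k} (h : S * T = c • (T * S)) : c ^ Module.finrank k V = 1 := by
  have hdet := congrArg LinearMap.det h
  rw [LinearMap.det_smul, (LinearMap.det).map_mul, (LinearMap.det).map_mul,
    mul_comm (LinearMap.det T)] at hdet
  exact (mul_eq_right₀ ((hS.map LinearMap.det).mul (hT.map LinearMap.det)).ne_zero).1 hdet.symm

theorem hasEigenvalue_pow_mul {S T : Module.End k V} (hS : Function.Injective S) {c μ : k}
    (h : T * S = c • (S * T)) (hμ : T.HasEigenvalue μ) (i : ℕ) :
    T.HasEigenvalue (c ^ i * μ) := by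
  induction i with
  | zero => rwa [pow_zero, one_mul]
  | succ i ih =>
    obtain ⟨v, hv⟩ := ih.exists_hasEigenvector
    refine Module.End.hasEigenvalue_of_hasEigenvector (x := S v)
      (Module.End.hasEigenvector_iff.2 ⟨Module.End.mem_eigenspace_iff.2 ?_, ?_⟩)
    · rw [← Module.End.mul_apply, h, LinearMap.smul_apply, Module.End.mul_apply, hv.apply_eq_smul,
        map_smul, smul_smul, pow_succ', mul_assoc]
    · exact (map_ne_zero_iff S hS).2 hv.2

theorem exists_injective_hasEigenvalue_of_mul_eq_smul_mul [IsAlgClosed k] [FiniteDimensional k V]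
    [Nontrivial V] {S T : Module.End k V} (hS : Function.Injective S) (hT : Function.Injective T)
    {c : k} (h : T * S = c • (S * T)) :
    ∃ μ : Fin (orderOf c) → k, Function.Injective μ ∧ ∀ i, T.HasEigenvalue (μ i) := by
  obtain ⟨μ, hμ⟩ := Module.End.exists_eigenvalue T
  have hμ0 : μ ≠ 0 := by
    rintro rfl
    obtain ⟨v, hv⟩ := hμ.exists_hasEigenvector
    exact hv.2 (hT (by rw [hv.apply_eq_smul, zero_smul, map_zero]))
  refine ⟨fun i ↦ c ^ (i : ℕ) * μ, fun i j hij ↦ ?_, fun i ↦ hasEigenvalue_pow_mul hS h hμ i⟩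
  exact Fin.ext (pow_injOn_Iio_orderOf i.2 j.2 (mul_right_cancel₀ hμ0 hij))

end Eigenbasis

section Irreducible

variable {k G V : Type*} [Field k] [Group G] [AddCommGroup V] [Module k V]

theorem isIrreducible_iff_forall_submodule {ρ : Representation k G V} : ρ.IsIrreducible ↔
    Nontrivial V ∧ ∀ U : Submodule k V, (∀ g, ∀ v ∈ U, ρ g v ∈ U) → U = ⊥ ∨ U = ⊤ := by
  have hbot : ∀ σ : Subrepresentation ρ, σ = ⊥ ↔ σ.toSubmodule = ⊥ := fun σ ↦
    Subrepresentation.toSubmodule_injective.eq_iff.symm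
  have htop : ∀ σ : Subrepresentation ρ, σ = ⊤ ↔ σ.toSubmodule = ⊤ := fun σ ↦
    Subrepresentation.toSubmodule_injective.eq_iff.symm
  constructor
  · intro h
    refine ⟨(Submodule.nontrivial_iff k).1 ⟨⊥, ⊤, fun he ↦ ?_⟩, fun U hU ↦ ?_⟩
    · exact bot_ne_top ((hbot (⊤ : Subrepresentation ρ)).2 he.symm).symm
    · rw [← hbot ⟨U, hU⟩, ← htop ⟨U, hU⟩]
      exact eq_bot_or_eq_top _
  · rintro ⟨hV, h⟩
    have : Nontrivial (Subrepresentation ρ) :=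
      ⟨⊥, ⊤, fun he ↦ bot_ne_top (α := Submodule k V) ((htop ⊥).1 he)⟩
    exact ⟨fun σ ↦ by simpa only [hbot, htop] using h σ.toSubmodule σ.apply_mem_toSubmodule⟩

/-- The faithful representation of `G ⧸ ker ρ` induced by `ρ`, on the same space. It transfers
statements about faithful representations to arbitrary ones. -/
def quotientKerRepresentation (ρ : Representation k G V) : Representation k (G ⧸ ρ.ker) V :=
  QuotientGroup.lift ρ.ker ρ le_rfl

theorem quotientKerRepresentation_injective (ρ : Representation k G V) :
    Function.Injective (quotientKerRepresentation ρ) :=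
  (injective_iff_map_eq_one _).2 fun q hq ↦ by
    obtain ⟨g, rfl⟩ := QuotientGroup.mk_surjective q
    exact (QuotientGroup.eq_one_iff g).2 hq

theorem isIrreducible_quotientKerRepresentation {ρ : Representation k G V}
    (hρ : ρ.IsIrreducible) : (quotientKerRepresentation ρ).IsIrreducible := by
  obtain ⟨hV, h⟩ := isIrreducible_iff_forall_submodule.1 hρ
  exact isIrreducible_iff_forall_submodule.2 ⟨hV, fun U hU ↦ h U fun g ↦ hU (g : G ⧸ ρ.ker)⟩

theorem exists_central_character [IsAlgClosed k] [FiniteDimensional k V]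
    {ρ : Representation k G V} (hρ : ρ.IsIrreducible) :
    ∃ ω : Subgroup.center G →* k, ∀ z : Subgroup.center G,
      ρ z = algebraMap k (Module.End k V) (ω z) := by
  have hV := (isIrreducible_iff_forall_submodule.1 hρ).1
  have hinj := FaithfulSMul.algebraMap_injective k (Module.End k V)
  have hschur : ∀ z : Subgroup.center G, ∃ c : k, ρ z = algebraMap k (Module.End k V) c := by
    intro z
    let f := Representation.IntertwiningMap.centralMul ρ (z : G) z.2
    have hscalar : Function.Bijective (algebraMap k (Representation.IntertwiningMap ρ ρ)) :=
      Representation.IsIrreducible.algebraMap_intertwiningMap_bijective_of_isAlgClosed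
    obtain ⟨c, hc⟩ := hscalar.2 f
    exact ⟨c, congrArg (fun φ ↦ φ.toLinearMap) hc.symm⟩
  choose ω hω using hschur
  refine ⟨⟨⟨ω, hinj ?_⟩, fun y z ↦ hinj ?_⟩, hω⟩
  · rw [← hω, map_one, Subgroup.coe_one, map_one]
  · rw [map_mul, ← hω, ← hω, ← hω, Subgroup.coe_mul, map_mul]

theorem isCyclic_center_of_injective [Finite G] [IsAlgClosed k] [FiniteDimensional k V]
    {ρ : Representation k G V} (hρ : ρ.IsIrreducible) (hinj : Function.Injective ρ) :
    IsCyclic (Subgroup.center G) := by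
  obtain ⟨ω, hω⟩ := exists_central_character hρ
  refine isCyclic_of_injective_ringHom ω fun y z h ↦ Subtype.ext (hinj ?_)
  rw [hω, hω, h]

theorem isCyclic_center_quotient_ker [Finite G] [IsAlgClosed k] [FiniteDimensional k V]
    {ρ : Representation k G V} (hρ : ρ.IsIrreducible) :
    IsCyclic (Subgroup.center (G ⧸ ρ.ker)) :=
  isCyclic_center_of_injective (isIrreducible_quotientKerRepresentation hρ)
    (quotientKerRepresentation_injective ρ)

theorem isCyclic_quotient_ker_of_finrank_eq_one [Finite G] (ρ : Representation k G V)
    (hV : Module.finrank k V = 1) : IsCyclic (G ⧸ ρ.ker) := by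
  refine isCyclic_of_injective_ringHom (LinearMap.det.comp (quotientKerRepresentation ρ))
    ((injective_iff_map_eq_one _).2 fun q hq ↦ ?_)
  obtain ⟨c, hc, -⟩ :=
    LinearMap.existsUnique_eq_smul_id_of_finrank_eq_one hV (quotientKerRepresentation ρ q)
  refine quotientKerRepresentation_injective ρ ?_
  rw [MonoidHom.comp_apply, hc, LinearMap.det_smul, hV, LinearMap.det_id, pow_one, mul_one] at hq
  rw [hc, hq, one_smul, map_one]
  rfl

end Irreducible

section AbelianSubgroup

variable {k G V : Type*} [Field k] [Group G] [AddCommGroup V] [Module k V]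

theorem index_ker_eq_of_pow_eq_one {p : ℕ} [hp : Fact p.Prime] (χ : G →* kˣ)
    (hχ : ∀ g, χ g ^ p = 1) (hne : ∃ g, χ g ≠ 1) : χ.ker.index = p := by
  have hle : χ.range ≤ rootsOfUnity p k := by
    rintro _ ⟨g, rfl⟩
    exact (mem_rootsOfUnity p _).2 (hχ g)
  obtain ⟨g, hg⟩ := hne
  have hfin : Finite χ.range := Finite.of_injective _ (Subgroup.inclusion_injective hle)
  rw [Subgroup.index_ker]
  refine le_antisymm ((Subgroup.card_le_of_le hle).trans ?_) ?_
  · exact card_rootsOfUnity k p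
  · rw [← orderOf_eq_prime (hχ g) hg, ← Nat.card_zpowers]
    exact Subgroup.card_le_of_le (Subgroup.zpowers_le.2 ⟨g, rfl⟩)

theorem exists_commutator_character [IsAlgClosed k] [FiniteDimensional k V]
    {ρ : Representation k G V} (hρ : ρ.IsIrreducible) {a : G}
    (ha : ∀ g, ⁅a, g⁆ ∈ Subgroup.center G) :
    ∃ χ : G →* kˣ, ∀ g, ρ a * ρ g = (χ g : k) • (ρ g * ρ a) := by
  obtain ⟨ω, hω⟩ := exists_central_character hρ
  let κ : G →* G := commutatorHom (MonoidHom.id G) a fun g h ↦ Subgroup.mem_center_iff.1 (ha h) g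
  refine ⟨(ω.comp (κ.codRestrict (Subgroup.center G) ha)).toHomUnits, fun g ↦ ?_⟩
  calc ρ a * ρ g = ρ ⁅a, g⁆ * (ρ g * ρ a) := by
        rw [← map_mul, ← map_mul, ← map_mul, commutatorElement_def]
        group
    _ = ω ⟨⁅a, g⁆, ha g⟩ • (ρ g * ρ a) := by
        rw [hω ⟨⁅a, g⁆, ha g⟩, ← Algebra.smul_def]

theorem exists_isMulCommutative_index_eq [IsAlgClosed k] [FiniteDimensional k V] {p : ℕ}
    [hp : Fact p.Prime] {ρ : Representation k G V} (hρ : ρ.IsIrreducible)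
    (hinj : Function.Injective ρ) (hV : Module.finrank k V = p) {a : G}
    (haZ : a ∉ Subgroup.center G) (ha : ∀ g, ⁅a, g⁆ ∈ Subgroup.center G) :
    ∃ A : Subgroup G, A.Normal ∧ IsMulCommutative A ∧ A.index = p := by
  have := (isIrreducible_iff_forall_submodule.1 hρ).1
  obtain ⟨χ, hχ⟩ := exists_commutator_character hρ ha
  have hunit : ∀ g, IsUnit (ρ g) := fun g ↦ (Group.isUnit g).map ρ
  have hpow : ∀ g, χ g ^ p = 1 := fun g ↦ Units.ext <| by
    rw [Units.val_pow_eq_pow_val, ← hV]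
    exact pow_finrank_eq_one_of_mul_eq_smul_mul (hunit a) (hunit g) (hχ g)
  have hcomm : ∀ g, χ g = 1 → Commute (ρ g) (ρ a) := fun g hg ↦ by
    have h := hχ g
    rw [hg, Units.val_one, one_smul] at h
    exact h.symm
  obtain ⟨g₀, hg₀⟩ : ∃ g, χ g ≠ 1 := by
    by_contra! h
    refine haZ (Subgroup.mem_center_iff.2 fun g ↦ hinj ?_)
    rw [map_mul, map_mul, hcomm g (h g)]
  have hord : orderOf (χ g₀ : k) = p := by rw [orderOf_units, orderOf_eq_prime (hpow g₀) hg₀]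
  obtain ⟨μ, hμ_inj, hμ⟩ := exists_injective_hasEigenvalue_of_mul_eq_smul_mul
    (ρ.apply_bijective g₀).1 (ρ.apply_bijective a).1 (hχ g₀)
  refine ⟨χ.ker, inferInstance, ⟨⟨fun x y ↦ Subtype.ext (hinj ?_)⟩⟩,
    index_ker_eq_of_pow_eq_one χ hpow ⟨g₀, hg₀⟩⟩
  rw [Subgroup.coe_mul, Subgroup.coe_mul, map_mul, map_mul]
  exact commute_of_commute_of_injective_eigenvalues (by rw [Fintype.card_fin, hord, hV])
    hμ_inj hμ (hcomm x x.2) (hcomm y y.2)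

end AbelianSubgroup

section DegreeBound

variable {k G V : Type*} [Field k] [Group G] [AddCommGroup V] [Module k V]

open scoped MonoidAlgebra IsMulCommutative in
theorem exists_common_eigenvector [IsAlgClosed k] [FiniteDimensional k V] [Nontrivial V]
    [IsMulCommutative G] (ρ : Representation k G V) :
    ∃ v ≠ 0, ∀ g, ∃ c : k, ρ g v = c • v := by
  have : FiniteDimensional k ρ.asModule := inferInstanceAs (FiniteDimensional k V)
  have : Nontrivial ρ.asModule := inferInstanceAs (Nontrivial V)
  have : IsArtinian k[G] ρ.asModule := isArtinian_of_tower k inferInstance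
  obtain ⟨N, hN⟩ := IsAtomic.exists_atom (Submodule k[G] ρ.asModule)
  have := isSimpleModule_iff_isAtom.2 hN
  have : FiniteDimensional k N := inferInstanceAs (FiniteDimensional k (N.restrictScalars k))
  have hdim : Module.finrank k N = 1 :=
    IsSimpleModule.finrank_eq_one_of_isMulCommutative k[G] N k
  obtain ⟨v, hv, hspan⟩ := finrank_eq_one_iff'.1 hdim
  refine ⟨ρ.asModuleEquiv v, ?_, fun g ↦ ?_⟩
  · simpa only [ne_eq, EmbeddingLike.map_eq_zero_iff, ZeroMemClass.coe_eq_zero] using hv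
  obtain ⟨c, hc⟩ := hspan (MonoidAlgebra.of k G g • v)
  have h := congrArg (fun w : N ↦ ρ.asModuleEquiv (w : ρ.asModule)) hc
  simp only [SetLike.val_smul_of_tower, map_smul, MonoidAlgebra.of_apply,
    Representation.single_smul, one_smul] at h
  exact ⟨c, h.symm⟩

theorem finrank_le_index_of_common_eigenvector {ρ : Representation k G V} (hρ : ρ.IsIrreducible)
    {H : Subgroup G} [H.FiniteIndex] {v : V} (hv : v ≠ 0) (h : ∀ g ∈ H, ∃ c : k, ρ g v = c • v) :
    Module.finrank k V ≤ H.index := by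
  have := Fintype.ofFinite (G ⧸ H)
  let f : G ⧸ H → V := fun q ↦ ρ q.out v
  let U := Submodule.span k (Set.range f)
  have hmem : ∀ g, ρ g v ∈ U := fun g ↦ by
    obtain ⟨c, hc⟩ := h _ (QuotientGroup.eq.1 (QuotientGroup.out_eq' (g : G ⧸ H)))
    have hg : ρ g v = c • f g := by
      rw [← map_smul, ← hc, ← Module.End.mul_apply, ← map_mul, mul_inv_cancel_left]
    rw [hg]
    exact U.smul_mem c (Submodule.subset_span ⟨_, rfl⟩)
  have hinv : ∀ g, U ≤ U.comap (ρ g) := fun g ↦ Submodule.span_le.2 <| by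
    rintro _ ⟨q, rfl⟩
    rw [SetLike.mem_coe, Submodule.mem_comap, ← Module.End.mul_apply, ← map_mul]
    exact hmem _
  have hU : U = ⊤ := by
    refine ((isIrreducible_iff_forall_submodule.1 hρ).2 U hinv).resolve_left fun hbot ↦ hv ?_
    simpa only [hbot, Submodule.mem_bot, map_one, Module.End.one_apply] using hmem 1
  rw [← finrank_top, ← hU, Subgroup.index, Nat.card_eq_fintype_card]
  exact finrank_range_le_card f

theorem finrank_le_index_of_isMulCommutative [IsAlgClosed k] [FiniteDimensional k V]
    {ρ : Representation k G V} (hρ : ρ.IsIrreducible) (A : Subgroup G) [A.FiniteIndex]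
    [IsMulCommutative A] : Module.finrank k V ≤ A.index := by
  have := (isIrreducible_iff_forall_submodule.1 hρ).1
  obtain ⟨v, hv, h⟩ := exists_common_eigenvector (ρ.comp A.subtype : Representation k A V)
  exact finrank_le_index_of_common_eigenvector hρ hv fun g hg ↦ h ⟨g, hg⟩

end DegreeBound

section FDRep

universe u v

variable {k : Type u} [Field k] {G : Type v} [Group G]

theorem isIrreducible_of_simple (V : FDRep k G) (hV : Simple V) :
    Representation.IsIrreducible V.ρ := by
  refine isIrreducible_iff_forall_submodule.2 ⟨?_, fun U hU ↦ ?_⟩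
  · by_contra h
    have := not_nontrivial_iff_subsingleton.1 h
    exact id_nonzero V (by ext v; exact Subsingleton.elim (α := V) _ _)
  · let σ : Representation k G U := Subrepresentation.toRepresentation ⟨U, hU⟩
    let f : FDRep.of σ ⟶ V := ⟨FGModuleCat.ofHom U.subtype, fun g ↦ by ext v; rfl⟩
    have hmono : Mono f := by
      have : Mono ((forget₂ (FDRep k G) (FGModuleCat k)).map f) :=
        ConcreteCategory.mono_of_injective _ Subtype.val_injective
      exact (forget₂ (FDRep k G) (FGModuleCat k)).mono_of_mono_map this
    by_cases h0 : f = 0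
    · refine Or.inl ((Submodule.eq_bot_iff U).2 fun x hx ↦ ?_)
      exact congrArg (fun φ : FDRep.of σ ⟶ V ↦ φ.hom.hom.hom ⟨x, hx⟩) h0
    · have : IsIso f := (Simple.mono_isIso_iff_nonzero f).2 h0
      refine Or.inr ((Submodule.eq_top_iff').2 fun x ↦ ?_)
      have hx : f.hom.hom.hom ((inv f).hom.hom.hom x) = x :=
        congrArg (fun φ : V ⟶ V ↦ φ.hom.hom.hom x) (IsIso.inv_hom_id f)
      rw [← hx]
      exact ((inv f).hom.hom.hom x : U).2

end FDRep

section Codegree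

theorem repKer_eq_ker {G : Type} [Group G] (V : FDRep ℂ G) : repKer V = MonoidHom.ker V.ρ := by
  ext g
  rw [repKer, MonoidHom.mem_ker, Units.ext_iff, Representation.asGroupHom_apply,
    MonoidHom.mem_ker, Units.val_one]

theorem eq_of_pow_succ_div_eq_pow {p m d : ℕ} (hp : 1 < p) (hm : m ≠ 0)
    (h : p ^ (m + 1) / d = p ^ m) : d = p := by
  have hpm : p ≤ p ^ m := Nat.le_self_pow hm p
  have hd : 0 < d := Nat.pos_of_ne_zero fun hd ↦ by
    rw [hd, Nat.div_zero] at h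
    omega
  have hlower : p ^ m * d ≤ p ^ m * p := by
    rw [← pow_succ]
    exact h ▸ Nat.div_mul_le_self (p ^ (m + 1)) d
  have hupper : p ^ m * p < (p ^ m + 1) * d := by
    rw [← pow_succ, mul_comm _ d, ← h]
    exact Nat.lt_mul_div_succ _ hd
  refine le_antisymm (Nat.le_of_mul_le_mul_left hlower (by omega)) ?_
  by_contra! hlt
  nlinarith

theorem lt_of_pow_add_two_div_eq_pow {p m d : ℕ} (hp : 1 < p) (h : p ^ (m + 2) / d = p ^ m) :
    p < d := by
  by_contra! hle
  have hd : 0 < d := Nat.pos_of_ne_zero fun hd ↦ by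
    rw [hd, Nat.div_zero] at h
    exact (pow_pos (zero_lt_one.trans hp) m).ne h
  have hdiv := Nat.div_le_div_left (a := p ^ (m + 2)) hle hd
  rw [h, pow_succ, Nat.mul_div_cancel _ (zero_lt_one.trans hp)] at hdiv
  exact absurd ((Nat.pow_le_pow_iff_right hp).1 hdiv) (by omega)

variable {G : Type} [Group G] [Finite G] {p : ℕ} [hp : Fact p.Prime] {V : FDRep ℂ G} {m : ℕ}

theorem not_card_repKer_dvd_of_repDegree_eq_one (hG : IsPGroup p G)
    (h2 : Subgroup.upperCentralSeries G 2 ≠ ⊤) (hV : repDegree V = 1) :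
    ¬ Nat.card (repKer V) ∣ p ^ 2 := fun h ↦ by
  rw [repKer_eq_ker] at h
  have := isCyclic_quotient_ker_of_finrank_eq_one V.ρ hV
  exact h2 (upperCentralSeries_succ_eq_top_of_isCyclic_quotient
    (le_upperCentralSeries_of_card_dvd hG h))

theorem repKer_eq_bot_and_repDegree_eq (hm : m ≠ 0) (hG : Nat.card G = p ^ (m + 1))
    (h2 : Subgroup.upperCentralSeries G 2 ≠ ⊤) (hV : codegree V = p ^ m) :
    repKer V = ⊥ ∧ repDegree V = p := by
  obtain ⟨i, j, hij, hcard, hindex⟩ := exists_card_eq_pow_index_eq_pow hG (repKer V)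
  rw [codegree, hindex] at hV
  have hmj : m ≤ j := (Nat.pow_le_pow_iff_right hp.out.one_lt).1 (hV ▸ Nat.div_le_self _ _)
  obtain rfl | rfl : j = m ∨ j = m + 1 := by omega
  · have hd : repDegree V = 1 :=
      (Nat.div_eq_self.1 hV).resolve_left (pow_ne_zero _ hp.out.ne_zero)
    refine absurd ?_ (not_card_repKer_dvd_of_repDegree_eq_one (IsPGroup.of_card hG) h2 hd)
    exact hcard ▸ pow_dvd_pow p (by omega)
  · obtain rfl : i = 0 := by omega
    exact ⟨Subgroup.card_eq_one.1 hcard, eq_of_pow_succ_div_eq_pow hp.out.one_lt hm hV⟩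

theorem card_repKer_eq_of_repDegree_le (hG : Nat.card G = p ^ (m + 2))
    (h2 : Subgroup.upperCentralSeries G 2 ≠ ⊤) (hd : repDegree V ≤ p) (hV : codegree V = p ^ m) :
    Nat.card (repKer V) = p := by
  obtain ⟨i, j, hij, hcard, hindex⟩ := exists_card_eq_pow_index_eq_pow hG (repKer V)
  rw [codegree, hindex] at hV
  have hmj : m ≤ j := (Nat.pow_le_pow_iff_right hp.out.one_lt).1 (hV ▸ Nat.div_le_self _ _)
  obtain rfl | rfl | rfl : j = m ∨ j = m + 1 ∨ j = m + 2 := by omega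
  · have hd : repDegree V = 1 :=
      (Nat.div_eq_self.1 hV).resolve_left (pow_ne_zero _ hp.out.ne_zero)
    refine absurd ?_ (not_card_repKer_dvd_of_repDegree_eq_one (IsPGroup.of_card hG) h2 hd)
    exact hcard ▸ pow_dvd_pow p (by omega)
  · obtain rfl : i = 1 := by omega
    rw [hcard, pow_one]
  · exact absurd (lt_of_pow_add_two_div_eq_pow hp.out.one_lt hV) hd.not_gt

theorem isCyclic_center_and_exists_isMulCommutative (hm : m ≠ 0) (hG : Nat.card G = p ^ (m + 1))
    (h2 : Subgroup.upperCentralSeries G 2 ≠ ⊤) (hV : p ^ m ∈ codSet G) :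
    IsCyclic (Subgroup.center G) ∧
      ∃ A : Subgroup G, A.Normal ∧ IsMulCommutative A ∧ A.index = p := by
  have := (IsPGroup.of_card hG).isNilpotent
  obtain ⟨V, hsimple, hcod⟩ := hV
  obtain ⟨hker, hd⟩ := repKer_eq_bot_and_repDegree_eq hm hG h2 hcod
  have hirr := isIrreducible_of_simple V hsimple
  have hinj : Function.Injective V.ρ := (MonoidHom.ker_eq_bot_iff V.ρ).1 (repKer_eq_ker V ▸ hker)
  have hZ : Subgroup.center G ≠ ⊤ := fun h ↦ h2 <| top_le_iff.1 <| by
    rw [← h, ← Subgroup.upperCentralSeries_one]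
    exact Subgroup.upperCentralSeries_mono G one_le_two
  obtain ⟨a, haZ, ha⟩ := exists_notMem_center_forall_commutatorElement_mem_center hZ
  exact ⟨isCyclic_center_of_injective hirr hinj,
    exists_isMulCommutative_index_eq hirr hinj hd haZ ha⟩

theorem card_center_eq_prime (hG : Nat.card G = p ^ (m + 2))
    (h2 : Subgroup.upperCentralSeries G 2 ≠ ⊤) [IsCyclic (Subgroup.center G)] {A : Subgroup G}
    [A.Normal] [IsMulCommutative A] (hA : A.index = p) (hX : p ^ m ∈ codSet G) :
    Nat.card (Subgroup.center G) = p := by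
  obtain ⟨X, hsimple, hcod⟩ := hX
  have hirr := isIrreducible_of_simple X hsimple
  have hd : repDegree X ≤ p := hA ▸ finrank_le_index_of_isMulCommutative hirr A
  have hK := card_repKer_eq_of_repDegree_le hG h2 hd hcod
  rw [repKer_eq_ker] at hK
  have hKZ : MonoidHom.ker X.ρ ≤ Subgroup.center G := by
    rw [← Subgroup.upperCentralSeries_one]
    exact le_upperCentralSeries_of_card_dvd (IsPGroup.of_card hG) (by rw [hK, pow_one])
  have hK1 : MonoidHom.ker X.ρ ≠ ⊥ := fun h ↦ by
    rw [h, Subgroup.card_bot] at hK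
    exact hp.out.one_lt.ne hK
  have := isCyclic_center_quotient_ker hirr
  rw [center_eq_of_isCyclic_center_quotient (IsPGroup.of_card hG) h2 hA hKZ hK1, hK]

end Codegree

theorem full_codegrees_class_dichotomy_general (p n : ℕ) (hp : p.Prime) (G : Type) [Group G]
    (hcard : Nat.card G = p ^ n) (h₁ : p ^ (n - 1) ∈ codSet G) (h₂ : p ^ (n - 2) ∈ codSet G) :
    nilClass G ≤ 2 ∨ nilClass G = n - 1 := by
  have := Fact.mk hp
  have : Finite G := Nat.finite_of_card_ne_zero (hcard ▸ pow_ne_zero n hp.ne_zero)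
  by_cases h2 : Subgroup.upperCentralSeries G 2 = ⊤
  · exact Or.inl (Nat.sInf_le h2)
  have hn : 2 < n := by
    by_contra! hn
    exact h2 (top_le_iff.1 (le_upperCentralSeries_of_card_dvd (IsPGroup.of_card hcard)
      (by rw [Subgroup.card_top, hcard]; exact pow_dvd_pow p hn)))
  obtain ⟨m, rfl⟩ := Nat.exists_eq_add_of_le' hn.le
  obtain ⟨hZ, A, hAn, hAc, hA⟩ :=
    isCyclic_center_and_exists_isMulCommutative (Nat.succ_ne_zero m) hcard h2 h₁
  have hZp := card_center_eq_prime hcard h2 hA h₂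
  right
  calc nilClass G = sInf (Set.Ici (m + 1)) := congrArg sInf <| Set.ext fun c ↦
        upperCentralSeries_eq_top_iff_of_card_center hcard hA hZp
    _ = m + 1 := csInf_Ici

/-- If a `p`-group of order `p^n` has `cod(G) = {p^i | 0 ≤ i ≤ n-1}`, then its nilpotence
class is at most 2 or it has maximal class. -/
theorem full_codegrees_class_dichotomy (p n : ℕ) (hp : p.Prime) (G : Type) [Group G] [Fintype G]
    (hcard : Fintype.card G = p ^ n)
    (hcod : codSet G = {m | ∃ i ≤ n - 1, m = p ^ i}) :
    nilClass G ≤ 2 ∨ nilClass G = n - 1 :=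
  full_codegrees_class_dichotomy_general p n hp G (Nat.card_eq_fintype_card.trans hcard)
    (hcod ▸ ⟨n - 1, le_rfl, rfl⟩) (hcod ▸ ⟨n - 2, by omega, rfl⟩)
end
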